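/- arXiv:1707.08087 — 2 statements merged into one kernel-verified Lean document; each statement's English description precedes it below -/
import Mathlib

section
/- Let q be a quadratic form over k and a ∈ k a nonzero scalar. Suppose q ≅ m·ℍ ⊥ r with r anisotropic, and q ⊥ ⟨a⟩ ≅ m'·ℍ ⊥ r' with r' anisotropic. Then the dimensions of the anisotropic parts differ by exactly one: either dim r' = dim r + 1 or dim r = dim r' + 1. (This is the paper's claim that dim((q')_{an}) − dim(q_{an}) = ±1 for q' = q ⊥ ⟨a⟩.) -/
open QuadraticMap

/-- The one-dimensional quadratic form `⟨a⟩ : x ↦ a·x²`. -/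
noncomputable def oneForm (k : Type*) [Field k] (a : k) : QuadraticForm k k :=
  a • QuadraticMap.sq

/-- The hyperbolic plane `ℍ : (x, y) ↦ x² − y²`. -/
noncomputable def hypPlane (k : Type*) [Field k] : QuadraticForm k (k × k) :=
  (oneForm k 1).prod (oneForm k (-1))

/-- `n·ℍ`, the orthogonal sum of `n` copies of the hyperbolic plane. -/
noncomputable def hyps (k : Type*) [Field k] (n : ℕ) :
    QuadraticForm k (Fin n → k × k) :=
  QuadraticMap.pi fun _ => hypPlane k

lemma hyps_prod_apply {k W : Type*} [Field k] [AddCommGroup W] [Module k W]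
    (r : QuadraticForm k W) (m : ℕ) (x : (Fin m → k × k) × W) :
    ((hyps k m).prod r) x =
      ∑ i, ((x.1 i).1 * (x.1 i).1 - (x.1 i).2 * (x.1 i).2) + r x.2 := by
  simp [hyps, hypPlane, oneForm, QuadraticMap.pi_apply, sub_eq_add_neg]

/-- difference map -/
noncomputable def diffMap (k W : Type*) [Field k] [AddCommGroup W] [Module k W] (m : ℕ) :
    ((Fin m → k × k) × W) →ₗ[k] (Fin m → k) where
  toFun x i := (x.1 i).1 - (x.1 i).2
  map_add' x y := by ext i; simp; ring
  map_smul' c x := by ext i; simp; ring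

/-- first coordinates -/
noncomputable def firstMap (k W : Type*) [Field k] [AddCommGroup W] [Module k W] (m : ℕ) :
    ((Fin m → k × k) × W) →ₗ[k] (Fin m → k) where
  toFun x i := (x.1 i).1
  map_add' x y := by ext i; simp
  map_smul' c x := by ext i; simp

/-- diagonal map -/
noncomputable def diagMap (k W : Type*) [Field k] [AddCommGroup W] [Module k W] (m : ℕ) :
    (Fin m → k) →ₗ[k] ((Fin m → k × k) × W) where
  toFun z := (fun i => (z i, z i), 0)
  map_add' x y := by ext i <;> simp
  map_smul' c x := by ext i <;> simp

lemma diagMap_injective (k W : Type*) [Field k] [AddCommGroup W] [Module k W] (m : ℕ) :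
    Function.Injective (diagMap k W m) := by
  intro x y h
  ext i
  have h1 := congrArg Prod.fst h
  exact congrArg Prod.fst (congrFun h1 i)

lemma diagMap_isotropic {k W : Type*} [Field k] [AddCommGroup W] [Module k W]
    (r : QuadraticForm k W) (m : ℕ) (z : Fin m → k) :
    ((hyps k m).prod r) (diagMap k W m z) = 0 := by
  rw [hyps_prod_apply]
  simp [diagMap]

lemma isotropic_le {k E W : Type*} [Field k] (hchar : (2 : k) ≠ 0)
    [AddCommGroup W] [Module k W] [AddCommGroup E] [Module k E] [FiniteDimensional k E]
    (r : QuadraticForm k W) (hr : r.Anisotropic) (m : ℕ)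
    (g : E →ₗ[k] ((Fin m → k × k) × W)) (hg : Function.Injective g)
    (hiso : ∀ x, ((hyps k m).prod r) (g x) = 0) : Module.finrank k E ≤ m := by
  let f := (diffMap k W m).comp g
  have hker : ∀ x, f x = 0 → (∀ i, ((g x).1 i).1 = ((g x).1 i).2) ∧ (g x).2 = 0 := by
    intro x hx
    have h1 : ∀ i, ((g x).1 i).1 = ((g x).1 i).2 := fun i =>
      sub_eq_zero.1 (congrFun hx i)
    refine ⟨h1, hr _ ?_⟩
    have := hiso x
    rw [hyps_prod_apply] at this
    simpa [h1] using this
  have horth : ∀ x, f x = 0 → ∀ y, firstMap k W m (g x) ⬝ᵥ f y = 0 := by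
    intro x hx y
    obtain ⟨h1, h2⟩ := hker x hx
    have hy := hiso y
    have hxy := hiso (x + y)
    rw [hyps_prod_apply] at hy hxy
    simp only [map_add, Prod.fst_add, Prod.snd_add, Pi.add_apply, h1, h2, zero_add] at hxy
    have h3 : 2 * (firstMap k W m (g x) ⬝ᵥ f y) = 0 := by
      rw [← sub_eq_zero.2 (hxy.trans hy.symm), add_sub_add_right_eq_sub, ← Finset.sum_sub_distrib,
        dotProduct, Finset.mul_sum]
      refine Finset.sum_congr rfl fun i _ => ?_
      simp only [firstMap, f, diffMap, LinearMap.comp_apply, LinearMap.coe_mk, AddHom.coe_mk, h1]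
      ring
    exact (mul_eq_zero.1 h3).resolve_left hchar
  let I := LinearMap.range f
  let φ : LinearMap.ker f →ₗ[k] I.dualAnnihilator :=
    LinearMap.codRestrict _ ((dotProductEquiv k (Fin m)).toLinearMap ∘ₗ
      (firstMap k W m) ∘ₗ g ∘ₗ (LinearMap.ker f).subtype) (by
      rintro ⟨x, hx⟩
      rw [Submodule.mem_dualAnnihilator]
      rintro _ ⟨y, rfl⟩
      exact horth x hx y)
  have hφ : Function.Injective φ := by
    rw [injective_iff_map_eq_zero]
    rintro ⟨x, hx⟩ h
    have h0 := congrArg Subtype.val h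
    have h1 : firstMap k W m (g x) = 0 :=
      (dotProductEquiv k (Fin m)).injective (h0.trans (map_zero _).symm)
    obtain ⟨h2, h3⟩ := hker x hx
    have h4 : g x = 0 := by
      refine Prod.ext (funext fun i => ?_) h3
      have : ((g x).1 i).1 = 0 := congrFun h1 i
      exact Prod.ext this ((h2 i).symm.trans this)
    exact Subtype.ext (hg (h4.trans (map_zero g).symm))
  have e1 := LinearMap.finrank_le_finrank_of_injective hφ
  have e2 := Subspace.finrank_add_finrank_dualAnnihilator_eq I
  have e3 := LinearMap.finrank_range_add_finrank_ker f
  rw [Module.finrank_fin_fun] at e2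
  change Module.finrank k I + _ = _ at e3
  omega

/-- The dimensions of the anisotropic parts of `q` and `q ⊥ ⟨a⟩` differ by
exactly one: if `q ≅ m·ℍ ⊥ r` with `r` anisotropic and
`q ⊥ ⟨a⟩ ≅ m'·ℍ ⊥ r'` with `r'` anisotropic, then
`dim r' = dim r + 1` or `dim r = dim r' + 1`. -/
theorem anisotropic_part_dim_add_one_dim
    {k : Type*} [Field k] (hchar : (2 : k) ≠ 0)
    {V W W' : Type*} [AddCommGroup V] [Module k V] [FiniteDimensional k V]
    [AddCommGroup W] [Module k W] [FiniteDimensional k W]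
    [AddCommGroup W'] [Module k W'] [FiniteDimensional k W']
    (q : QuadraticForm k V) (r : QuadraticForm k W) (r' : QuadraticForm k W')
    (a : k) (ha : a ≠ 0) (m m' : ℕ)
    (hq : q.Equivalent ((hyps k m).prod r)) (hr : r.Anisotropic)
    (hq' : (q.prod (oneForm k a)).Equivalent ((hyps k m').prod r'))
    (hr' : r'.Anisotropic) :
    Module.finrank k W' = Module.finrank k W + 1 ∨
      Module.finrank k W = Module.finrank k W' + 1 := by
  obtain ⟨e⟩ := hq
  obtain ⟨e'⟩ := hq'
  have d1 : Module.finrank k V = 2 * m + Module.finrank k W := by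
    rw [e.toLinearEquiv.finrank_eq]
    simp [Module.finrank_prod, Module.finrank_pi_fintype]
    ring
  have d2 : Module.finrank k V + 1 = 2 * m' + Module.finrank k W' := by
    have := e'.toLinearEquiv.finrank_eq
    simp [Module.finrank_prod, Module.finrank_pi_fintype] at this
    omega
  have h1 : m ≤ m' := by
    have := isotropic_le (E := Fin m → k) hchar r' hr' m'
      (e'.toLinearEquiv.toLinearMap ∘ₗ LinearMap.inl k V k ∘ₗ
        e.toLinearEquiv.symm.toLinearMap ∘ₗ diagMap k W m)
      (e'.toLinearEquiv.injective.comp (LinearMap.inl_injective.comp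
        (e.toLinearEquiv.symm.injective.comp (diagMap_injective k W m)))) (by
        intro z
        refine (e'.map_app _).trans ?_
        have := (e.symm.map_app (diagMap k W m z)).trans (diagMap_isotropic r m z)
        rw [QuadraticMap.prod_apply]
        change q (e.symm (diagMap k W m z)) + oneForm k a 0 = 0
        rw [this, map_zero, add_zero])
    rwa [Module.finrank_fin_fun] at this
  have h2 : m' ≤ m + 1 := by
    let D : (Fin m' → k) →ₗ[k] V × k := e'.toLinearEquiv.symm.toLinearMap ∘ₗ diagMap k W' m'
    have hD : Function.Injective D :=
      e'.toLinearEquiv.symm.injective.comp (diagMap_injective k W' m')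
    have hD0 : ∀ z, (q.prod (oneForm k a)) (D z) = 0 := fun z =>
      (e'.symm.map_app (diagMap k W' m' z)).trans (diagMap_isotropic r' m' z)
    let s : (Fin m' → k) →ₗ[k] k := LinearMap.snd k V k ∘ₗ D
    have e3 := LinearMap.finrank_range_add_finrank_ker s
    have e4 := Submodule.finrank_le (LinearMap.range s)
    rw [Module.finrank_fin_fun] at e3
    rw [Module.finrank_self] at e4
    have := isotropic_le (E := LinearMap.ker s) hchar r hr m
      (e.toLinearEquiv.toLinearMap ∘ₗ LinearMap.fst k V k ∘ₗ D ∘ₗ (LinearMap.ker s).subtype)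
      (by
        rw [injective_iff_map_eq_zero]
        rintro ⟨z, hz⟩ h
        have h5 : (D z).1 = 0 := e.toLinearEquiv.injective (h.trans (map_zero _).symm)
        have h6 : D z = 0 := Prod.ext h5 hz
        exact Subtype.ext (hD (h6.trans (map_zero D).symm)))
      (by
        rintro ⟨z, hz⟩
        refine (e.map_app _).trans ?_
        have h7 := hD0 z
        have h8 : (D z).2 = 0 := hz
        rw [QuadraticMap.prod_apply, h8, map_zero, add_zero] at h7
        exact h7)
    omega
  omega
end

section
/- Let q be a quadratic form over k of odd dimension 2m+1, and let a, λ ∈ k be nonzero scalars. If both q ⊥ ⟨a⟩ and (λ·q) ⊥ ⟨a⟩ are hyperbolic, i.e. q ⊥ ⟨a⟩ ≅ (m+1)·ℍ and (λ·q) ⊥ ⟨a⟩ ≅ (m+1)·ℍ, then λ is a square in k. (This is the algebraic heart of the paper's final step: if q' and λ·p' split over the same field, then the Pfister form ⟨⟨λ⟩⟩ = ±(q' − λp') is split there, forcing λ to be a square.) -/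
open QuadraticMap

theorem polar_oneForm (k : Type*) [Field k] (a x y : k) :
    polar (oneForm k a) x y = 2 * a * x * y := by
  simp [oneForm, polar]; ring

theorem hyps_nondeg {k : Type*} [Field k] (hchar : (2 : k) ≠ 0) (n : ℕ)
    (z : Fin n → k × k) (h : ∀ w, polar (hyps k n) z w = 0) : z = 0 := by
  funext i
  have h1 := h (Pi.single i (1, 0))
  have h2 := h (Pi.single i (0, 1))
  rw [hyps, QuadraticMap.Ring.polar_pi, Finset.sum_eq_single i] at h1 h2
  · simp [hypPlane, polar_oneForm, hchar] at h1 h2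
    exact Prod.ext h1 h2
  all_goals simp +contextual [polar]

theorem equiv_nondeg {k : Type*} [Field k] (hchar : (2 : k) ≠ 0)
    {V : Type*} [AddCommGroup V] [Module k V]
    (q : QuadraticForm k V) (n : ℕ) (a : k)
    (hq : (q.prod (oneForm k a)).Equivalent (hyps k n))
    (x : V) (hx : ∀ y, polar q x y = 0) : x = 0 := by
  obtain ⟨e⟩ := hq
  have h0 : e (x, 0) = 0 := by
    apply hyps_nondeg hchar
    intro w
    obtain ⟨v, rfl⟩ := e.toLinearEquiv.surjective w
    have : polar (q.prod (oneForm k a)) (x, 0) v = 0 := by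
      simp [polar_oneForm, hx]
    refine Eq.trans ?_ this
    have hm : ∀ u, hyps k n (e.toLinearEquiv u) = q.prod (oneForm k a) u := e.map_app
    change polar (hyps k n) (e.toLinearEquiv (x, 0)) (e.toLinearEquiv v) = _
    unfold polar
    rw [← map_add e.toLinearEquiv, hm, hm, hm]
  have h1 : e.toLinearEquiv (x, 0) = 0 := h0
  have h2 := (LinearEquiv.map_eq_zero_iff _).1 h1
  exact congrArg Prod.fst h2

theorem discr_prod_oneForm {k : Type*} [Field k] [Invertible (2 : k)]
    {V : Type*} [AddCommGroup V] [Module k V] {n : ℕ} (b : Module.Basis (Fin n) k V)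
    (q : QuadraticForm k V) (a : k) :
    QuadraticForm.discr (b.prod (Module.Basis.singleton Unit k)) (q.prod (oneForm k a))
      = QuadraticForm.discr b q * a := by
  have : QuadraticForm.toMatrix (b.prod (Module.Basis.singleton Unit k)) (q.prod (oneForm k a))
      = Matrix.fromBlocks (QuadraticForm.toMatrix b q) 0 0 (Matrix.of fun _ _ => a) := by
    ext i j
    rcases i with i | i <;> rcases j with j | j <;>
      simp [QuadraticForm.toMatrix, LinearMap.toMatrix₂_apply, oneForm]
  rw [QuadraticForm.discr, this, Matrix.det_fromBlocks_zero₂₁]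
  simp [QuadraticForm.discr]

/-- If `q` has odd dimension `2m+1` and both `q ⊥ ⟨a⟩` and `(λ·q) ⊥ ⟨a⟩`
are hyperbolic (equivalent to `(m+1)·ℍ`), then `λ` is a square in `k`. -/
theorem scalar_is_square_of_both_hyperbolic
    {k : Type*} [Field k] (hchar : (2 : k) ≠ 0)
    {V : Type*} [AddCommGroup V] [Module k V] [FiniteDimensional k V]
    (q : QuadraticForm k V) (m : ℕ) (hdim : Module.finrank k V = 2 * m + 1)
    (a l : k) (ha : a ≠ 0) (hl : l ≠ 0)
    (hq : (q.prod (oneForm k a)).Equivalent (hyps k (m + 1)))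
    (hlq : ((l • q).prod (oneForm k a)).Equivalent (hyps k (m + 1))) :
    IsSquare l := by
  let _ : Invertible (2 : k) := invertibleOfNonzero hchar
  let b := Module.finBasisOfFinrankEq k V hdim
  have hd : QuadraticForm.discr b q ≠ 0 := by
    refine (LinearMap.separatingLeft_iff_det_ne_zero b).1 ?_
    intro x hx
    refine equiv_nondeg hchar q _ a hq x fun y => ?_
    have := hx y
    rw [QuadraticMap.associated_apply] at this
    simpa [polar, hchar] using this
  obtain ⟨e⟩ := hlq.trans hq.symm
  let B := b.prod (Module.Basis.singleton Unit k)
  have hc : (q.prod (oneForm k a)).comp (e.toLinearEquiv : V × k →ₗ[k] V × k)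
      = (l • q).prod (oneForm k a) := by
    ext v
    exact e.map_app v
  have h := QuadraticForm.discr_comp (b := B) B (q.prod (oneForm k a))
    (e.toLinearEquiv : V × k →ₗ[k] V × k)
  rw [hc, discr_prod_oneForm, discr_prod_oneForm, QuadraticForm.discr_smul, Fintype.card_fin] at h
  generalize (LinearMap.toMatrix B B (e.toLinearEquiv : V × k →ₗ[k] V × k)).det = t at h
  have h3 : l ^ (2 * m + 1) = t * t := by
    apply mul_right_cancel₀ (mul_ne_zero hd ha)
    linear_combination h
  refine ⟨t / l ^ m, ?_⟩
  field_simp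
  linear_combination h3
end
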